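/- Let n ≥ 1, 0 < R₂ < R₁, λ, ν > 0, and let f : [R₂, R₁] → ℝ be continuous. Define F(r) = −(1/rⁿ)·∫_{R₂}^{r} f(ρ)ρ^{n−1} dρ. Let ζ : [R₂, R₁] → ℝ be continuous with ζ(r) ≠ 0 and 2ζ(r)²(λ + ζ(r)/ν) = F(r)²r² for all r ∈ [R₂, R₁], and define v(r) = C + ∫_{R₂}^{r} F(ρ)ρ/ζ(ρ) dρ and u(x) = v(|x|) on the closed annulus {R₂ ≤ |x| ≤ R₁} ⊂ ℝⁿ. Then for every x with R₂ < |x| < R₁: (i) u is differentiable at x with ∇u(x) = (F(|x|)/ζ(|x|))·x; (ii) ν(|∇u(x)|²/2 − λ)·∇u(x) = F(|x|)·x; and (iii) the vector field x ↦ ν(|∇u(x)|²/2 − λ)∇u(x) is differentiable at x with divergence equal to −f(|x|), i.e. u solves the Euler–Lagrange equation div(∇H(∇u)) + f = 0 in the open annulus, where H(γ) = (ν/2)(|γ|²/2 − λ)². -/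

import Mathlib

/-!
For a radial potential `u(x) = v(|x|)` the gradient is `(v'(|x|) / |x|) x`, so the choice
`v'(r) = F(r) r / ζ(r)` gives `∇u = (F / ζ) x`. The dual algebraic equation says exactly that
`ν (|∇u|² / 2 - λ) = ζ`, hence the stress `∇H(∇u)` is the radial field `F(|x|) x`. Its divergence
is `n F(r) + r F'(r) = r^{1-n} (rⁿ F(r))'`, which is `-f(r)` because `rⁿ F(r) = -∫ f(ρ) ρ^{n-1} dρ`.
-/

open Set Filter Topology InnerProductSpace Gradient

theorem hasDerivAt_integral_of_continuousOn_Icc {G : Type*} [NormedAddCommGroup G]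
    [NormedSpace ℝ G] [CompleteSpace G] {g : ℝ → G} {a b r : ℝ}
    (hg : ContinuousOn g (Icc a b)) (hr : r ∈ Ioo a b) :
    HasDerivAt (fun s => ∫ ρ in a..s, g ρ) (g r) r := by
  have hnhds : Icc a b ∈ 𝓝 r := Icc_mem_nhds hr.1 hr.2
  have hint : IntervalIntegrable g MeasureTheory.volume a r :=
    (hg.mono (Icc_subset_Icc_right hr.2.le)).intervalIntegrable_of_Icc hr.1.le
  exact intervalIntegral.integral_hasDerivAt_right hint
    ⟨Icc a b, hnhds, hg.aestronglyMeasurable measurableSet_Icc⟩ (hg.continuousAt hnhds)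

theorem eventually_norm_mem_Ioo {G : Type*} [SeminormedAddGroup G] {a b : ℝ} {x : G}
    (hx : ‖x‖ ∈ Ioo a b) : ∀ᶠ y in 𝓝 x, ‖y‖ ∈ Ioo a b :=
  continuous_norm.continuousAt.eventually_mem (isOpen_Ioo.mem_nhds hx)

section Divergence

variable {G : Type*} [NormedAddCommGroup G] [NormedSpace ℝ G]

/-- The divergence of a vector field, as the trace of its Fréchet derivative. It is `0` by
convention where the field is not differentiable or when the space is infinite-dimensional. -/
noncomputable def divergence (V : G → G) (x : G) : ℝ :=
  LinearMap.trace ℝ G (fderiv ℝ V x).toLinearMap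

theorem divergence_congr {V W : G → G} {x : G} (h : V =ᶠ[𝓝 x] W) :
    divergence V x = divergence W x := by
  rw [divergence, h.fderiv_eq, divergence]

end Divergence

section RadialStress

/-- The coefficient `F(r) = -r⁻ⁿ ∫_a^r f(ρ) ρ^{n-1} dρ` of the radial field `F(|x|) x` on `ℝⁿ`,
`n ≥ 1`, that balances the source `f(|x|)` and vanishes on the sphere `|x| = a`. -/
noncomputable def radialStress (n : ℕ) (a : ℝ) (f : ℝ → ℝ) (r : ℝ) : ℝ :=
  -(1 / r ^ n) * ∫ ρ in a..r, f ρ * ρ ^ (n - 1)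

variable {n : ℕ} {a b r : ℝ} {f : ℝ → ℝ}

theorem continuousOn_radialStress (hf : ContinuousOn f (uIcc a b)) (h0 : (0 : ℝ) ∉ uIcc a b) :
    ContinuousOn (radialStress n a f) (uIcc a b) := by
  have hweight : ContinuousOn (fun r : ℝ => -(1 / r ^ n)) (uIcc a b) :=
    (continuousOn_const.div₀ (continuousOn_pow n)
      fun r hr => pow_ne_zero n (ne_of_mem_of_not_mem hr h0)).neg
  have hmoment : ContinuousOn (fun ρ => f ρ * ρ ^ (n - 1)) (uIcc a b) :=
    hf.mul (continuousOn_pow _)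
  exact hweight.mul
    (intervalIntegral.continuousOn_primitive_interval hmoment.integrableOn_uIcc)

theorem hasDerivAt_radialStress (hn : n ≠ 0) (hf : ContinuousOn f (Icc a b)) (hr : r ∈ Ioo a b)
    (hr0 : r ≠ 0) :
    HasDerivAt (radialStress n a f) (-(n * radialStress n a f r + f r) / r) r := by
  have hprimitive : HasDerivAt (fun s => ∫ ρ in a..s, f ρ * ρ ^ (n - 1)) (f r * r ^ (n - 1)) r :=
    hasDerivAt_integral_of_continuousOn_Icc (hf.mul (continuousOn_pow _)) hr
  have hweight : HasDerivAt (fun s : ℝ => -(1 / s ^ n)) (n * r ^ (n - 1) / (r ^ n) ^ 2) r := by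
    simpa [neg_div] using ((hasDerivAt_pow n r).fun_inv (pow_ne_zero n hr0)).fun_neg
  refine (hweight.fun_mul hprimitive).congr_deriv ?_
  obtain ⟨m, rfl⟩ := Nat.exists_eq_succ_of_ne_zero hn
  simp only [radialStress, Nat.succ_eq_add_one, Nat.add_sub_cancel]
  field_simp
  ring

end RadialStress

section Radial

variable {E : Type*} [NormedAddCommGroup E] [InnerProductSpace ℝ E] {x : E}

theorem hasFDerivAt_norm (hx : x ≠ 0) :
    HasFDerivAt (fun y : E => ‖y‖) (‖x‖⁻¹ • innerSL ℝ x) x := by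
  have hsqrt := (hasStrictFDerivAt_norm_sq x).hasFDerivAt.sqrt (by positivity)
  simp only [Real.sqrt_sq (norm_nonneg _)] at hsqrt
  refine hsqrt.congr_fderiv ?_
  rw [← Nat.cast_smul_eq_nsmul ℝ, smul_smul]
  congr 1
  simp

theorem hasGradientAt_comp_norm [CompleteSpace E] {v : ℝ → ℝ} {v' : ℝ}
    (hv : HasDerivAt v v' ‖x‖) (hx : x ≠ 0) :
    HasGradientAt (fun y : E => v ‖y‖) ((v' / ‖x‖) • x) x := by
  rw [hasGradientAt_iff_hasFDerivAt]
  refine (hv.comp_hasFDerivAt x (hasFDerivAt_norm hx)).congr_fderiv ?_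
  rw [smul_smul, map_smul, div_eq_mul_inv]
  rfl

theorem hasFDerivAt_comp_norm_smul {φ : ℝ → ℝ} {φ' : ℝ}
    (hφ : HasDerivAt φ φ' ‖x‖) (hx : x ≠ 0) :
    HasFDerivAt (fun y : E => φ ‖y‖ • y)
      (φ ‖x‖ • ContinuousLinearMap.id ℝ E + (φ' / ‖x‖) • rankOne ℝ x x) x := by
  refine ((hφ.comp_hasFDerivAt x (hasFDerivAt_norm hx)).smul (hasFDerivAt_id x)).congr_fderiv ?_
  ext y
  simp [smul_smul, div_eq_mul_inv, mul_assoc]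

theorem divergence_comp_norm_smul [FiniteDimensional ℝ E] {φ : ℝ → ℝ} {φ' : ℝ}
    (hφ : HasDerivAt φ φ' ‖x‖) (hx : x ≠ 0) :
    divergence (fun y : E => φ ‖y‖ • y) x = Module.finrank ℝ E * φ ‖x‖ + ‖x‖ * φ' := by
  rw [divergence, (hasFDerivAt_comp_norm_smul hφ hx).fderiv]
  simp only [ContinuousLinearMap.toLinearMap_add, ContinuousLinearMap.toLinearMap_smul, map_add,
    map_smul, ContinuousLinearMap.coe_id, LinearMap.trace_id, trace_rankOne,
    real_inner_self_eq_norm_sq, smul_eq_mul]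
  field_simp

theorem hasGradientAt_of_eq_add_integral_norm [CompleteSpace E] {u : E → ℝ} {g : ℝ → ℝ}
    {a b C : ℝ} (hg : ContinuousOn g (Icc a b))
    (hu : ∀ y : E, ‖y‖ ∈ Ioo a b → u y = C + ∫ ρ in a..‖y‖, g ρ)
    (hx : ‖x‖ ∈ Ioo a b) (hx0 : x ≠ 0) :
    HasGradientAt u ((g ‖x‖ / ‖x‖) • x) x := by
  have hprofile : HasDerivAt (fun r => C + ∫ ρ in a..r, g ρ) (g ‖x‖) ‖x‖ :=
    (hasDerivAt_integral_of_continuousOn_Icc hg hx).const_add C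
  exact (hasGradientAt_comp_norm hprofile hx0).congr_of_eventuallyEq
    ((eventually_norm_mem_Ioo hx).mono hu)

theorem differentiableAt_radialStress_norm_smul {n : ℕ} {a b : ℝ} {f : ℝ → ℝ} (hn : n ≠ 0)
    (hf : ContinuousOn f (Icc a b)) (hx : ‖x‖ ∈ Ioo a b) (hx0 : x ≠ 0) :
    DifferentiableAt ℝ (fun y : E => radialStress n a f ‖y‖ • y) x :=
  (hasFDerivAt_comp_norm_smul
    (hasDerivAt_radialStress hn hf hx (norm_ne_zero_iff.mpr hx0)) hx0).differentiableAt

theorem divergence_radialStress_norm_smul [FiniteDimensional ℝ E] {a b : ℝ} {f : ℝ → ℝ}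
    (hf : ContinuousOn f (Icc a b)) (hx : ‖x‖ ∈ Ioo a b) (hx0 : x ≠ 0) :
    divergence (fun y : E => radialStress (Module.finrank ℝ E) a f ‖y‖ • y) x = -f ‖x‖ := by
  have hnorm : ‖x‖ ≠ 0 := norm_ne_zero_iff.mpr hx0
  have hfinrank : Module.finrank ℝ E ≠ 0 :=
    (Module.finrank_pos_iff_exists_ne_zero.mpr ⟨x, hx0⟩).ne'
  rw [divergence_comp_norm_smul (hasDerivAt_radialStress hfinrank hf hx hnorm) hx0]
  field_simp
  ring

end Radial

section DoubleWell

variable {E : Type*} [NormedAddCommGroup E] [InnerProductSpace ℝ E] [CompleteSpace E]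
  {lam nu : ℝ}

/-- The double-well potential `H(γ) = (ν/2) (|γ|²/2 - λ)²`. -/
noncomputable def doubleWell (lam nu : ℝ) (γ : E) : ℝ :=
  nu / 2 * (‖γ‖ ^ 2 / 2 - lam) ^ 2

theorem gradient_doubleWell (lam nu : ℝ) (γ : E) :
    ∇ (doubleWell lam nu) γ = (nu * (‖γ‖ ^ 2 / 2 - lam)) • γ := by
  refine HasGradientAt.gradient (hasGradientAt_iff_hasFDerivAt.mpr ?_)
  have hinner : HasDerivAt (fun t : ℝ => nu / 2 * (t / 2 - lam) ^ 2)
      (nu / 2 * (‖γ‖ ^ 2 / 2 - lam)) (‖γ‖ ^ 2) := by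
    refine ((((hasDerivAt_id _).div_const 2).sub_const lam).fun_pow 2).const_mul (nu / 2)
      |>.congr_deriv ?_
    simp only [id_eq]
    ring
  refine (hinner.comp_hasFDerivAt γ (hasStrictFDerivAt_norm_sq γ).hasFDerivAt).congr_fderiv ?_
  ext y
  simp only [smul_apply, coe_innerSL_apply, nsmul_eq_mul, Nat.cast_ofNat, smul_eq_mul, map_smul,
    toDual_apply_apply]
  ring

theorem gradient_doubleWell_div_smul {p z : ℝ} {x : E} (hnu : nu ≠ 0) (hz : z ≠ 0)
    (hdual : 2 * z ^ 2 * (lam + z / nu) = p ^ 2 * ‖x‖ ^ 2) :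
    ∇ (doubleWell lam nu) ((p / z) • x) = p • x := by
  have hnorm : ‖(p / z) • x‖ ^ 2 = 2 * (lam + z / nu) := by
    rw [norm_smul, mul_pow, Real.norm_eq_abs, sq_abs, div_pow, div_mul_eq_mul_div, ← hdual]
    field_simp
  have hz_eq : nu * (‖(p / z) • x‖ ^ 2 / 2 - lam) = z := by
    rw [hnorm]
    field_simp
    ring
  rw [gradient_doubleWell, hz_eq, smul_smul, mul_div_cancel₀ p hz]

end DoubleWell

theorem stmt_17_general {E : Type*} [NormedAddCommGroup E] [InnerProductSpace ℝ E]
    [CompleteSpace E] [FiniteDimensional ℝ E] {a b lam nu C : ℝ} {f F ζ : ℝ → ℝ} {u : E → ℝ}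
    (ha : 0 < a) (hnu : nu ≠ 0) (hf : ContinuousOn f (Icc a b))
    (hF : F = radialStress (Module.finrank ℝ E) a f)
    (hζc : ContinuousOn ζ (Icc a b)) (hζ0 : ∀ r ∈ Icc a b, ζ r ≠ 0)
    (hdual : ∀ r ∈ Ioo a b, 2 * ζ r ^ 2 * (lam + ζ r / nu) = F r ^ 2 * r ^ 2)
    (hu : ∀ y : E, ‖y‖ ∈ Ioo a b → u y = C + ∫ ρ in a..‖y‖, F ρ * ρ / ζ ρ)
    {x : E} (hx : ‖x‖ ∈ Ioo a b) :
    HasGradientAt u ((F ‖x‖ / ζ ‖x‖) • x) x ∧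
      ∇ (doubleWell lam nu) (∇ u x) = F ‖x‖ • x ∧
      DifferentiableAt ℝ (fun y => ∇ (doubleWell lam nu) (∇ u y)) x ∧
      divergence (fun y => ∇ (doubleWell lam nu) (∇ u y)) x = -f ‖x‖ := by
  have hne {y : E} (hy : ‖y‖ ∈ Ioo a b) : y ≠ 0 := norm_pos_iff.mp (ha.trans hy.1)
  have hFc : ContinuousOn F (Icc a b) := by
    have hab : a < b := hx.1.trans hx.2
    rw [hF]
    rw [← uIcc_of_le hab.le] at hf ⊢
    exact continuousOn_radialStress hf (notMem_uIcc_of_lt ha (ha.trans hab))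
  have hgrad (y : E) (hy : ‖y‖ ∈ Ioo a b) : HasGradientAt u ((F ‖y‖ / ζ ‖y‖) • y) y := by
    have hcoeff : F ‖y‖ * ‖y‖ / ζ ‖y‖ / ‖y‖ = F ‖y‖ / ζ ‖y‖ := by
      rw [div_right_comm, mul_div_cancel_right₀ _ (norm_ne_zero_iff.mpr (hne hy))]
    rw [← hcoeff]
    exact hasGradientAt_of_eq_add_integral_norm ((hFc.mul continuousOn_id).div₀ hζc hζ0) hu hy
      (hne hy)
  have hstress (y : E) (hy : ‖y‖ ∈ Ioo a b) :
      ∇ (doubleWell lam nu) (∇ u y) = F ‖y‖ • y := by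
    rw [(hgrad y hy).gradient]
    exact gradient_doubleWell_div_smul hnu (hζ0 _ (Ioo_subset_Icc_self hy)) (hdual _ hy)
  have hlocal : (fun y => ∇ (doubleWell lam nu) (∇ u y)) =ᶠ[𝓝 x] fun y => F ‖y‖ • y :=
    (eventually_norm_mem_Ioo hx).mono hstress
  refine ⟨hgrad x hx, hstress x hx, ?_, ?_⟩
  · rw [hlocal.differentiableAt_iff, hF]
    have hfinrank : Module.finrank ℝ E ≠ 0 :=
      (Module.finrank_pos_iff_exists_ne_zero.mpr ⟨x, hne hx⟩).ne'
    exact differentiableAt_radialStress_norm_smul hfinrank hf hx (hne hx)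
  · rw [divergence_congr hlocal, hF]
    exact divergence_radialStress_norm_smul hf hx (hne hx)

/-- With `F(r) = -(1/rⁿ)·∫_{R₂}^{r} f(ρ)ρ^{n-1} dρ`, a continuous
nonvanishing root branch `ζ` of the dual algebraic equation
`2ζ(r)²(λ + ζ(r)/ν) = F(r)²r²`, `v(r) = C + ∫_{R₂}^{r} F(ρ)ρ/ζ(ρ) dρ` and
`u(x) = v(|x|)` on the closed annulus, for every `x` with `R₂ < |x| < R₁`:
(i) `u` is differentiable at `x` with gradient `(F(|x|)/ζ(|x|))·x`;
(ii) `ν(|∇u(x)|²/2 - λ)·∇u(x) = F(|x|)·x`;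
(iii) the stress field `x ↦ ν(|∇u(x)|²/2 - λ)∇u(x)` is differentiable at `x`
with divergence (trace of the Fréchet derivative) equal to `-f(|x|)`, i.e. `u`
solves `div(∇H(∇u)) + f = 0` for `H(γ) = (ν/2)(|γ|²/2 - λ)²`. -/
theorem stmt_17 (n : ℕ) (hn : 1 ≤ n) (R₁ R₂ : ℝ) (hR₂ : 0 < R₂) (hR : R₂ < R₁)
    (lam nu : ℝ) (hlam : 0 < lam) (hnu : 0 < nu)
    (f : ℝ → ℝ) (hf : ContinuousOn f (Set.Icc R₂ R₁))
    (F : ℝ → ℝ)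
    (hF : ∀ r, F r = -(1 / r ^ n) * ∫ ρ in R₂..r, f ρ * ρ ^ (n - 1))
    (ζ : ℝ → ℝ) (hζc : ContinuousOn ζ (Set.Icc R₂ R₁))
    (hζ0 : ∀ r ∈ Set.Icc R₂ R₁, ζ r ≠ 0)
    (hdae : ∀ r ∈ Set.Icc R₂ R₁, 2 * ζ r ^ 2 * (lam + ζ r / nu) = F r ^ 2 * r ^ 2)
    (C : ℝ) (v : ℝ → ℝ)
    (hv : ∀ r, v r = C + ∫ ρ in R₂..r, F ρ * ρ / ζ ρ)
    (u : EuclideanSpace ℝ (Fin n) → ℝ)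
    (hu : ∀ x : EuclideanSpace ℝ (Fin n), R₂ ≤ ‖x‖ → ‖x‖ ≤ R₁ → u x = v ‖x‖) :
    ∀ x : EuclideanSpace ℝ (Fin n), R₂ < ‖x‖ → ‖x‖ < R₁ →
      DifferentiableAt ℝ u x ∧
      gradient u x = (F ‖x‖ / ζ ‖x‖) • x ∧
      (nu * (‖gradient u x‖ ^ 2 / 2 - lam)) • gradient u x = F ‖x‖ • x ∧
      DifferentiableAt ℝ
        (fun y => (nu * (‖gradient u y‖ ^ 2 / 2 - lam)) • gradient u y) x ∧
      LinearMap.trace ℝ (EuclideanSpace ℝ (Fin n))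
        (fderiv ℝ (fun y => (nu * (‖gradient u y‖ ^ 2 / 2 - lam)) • gradient u y)
          x).toLinearMap = -f ‖x‖ := by
  intro x hx₂ hx₁
  have hFeq : F = radialStress (Module.finrank ℝ (EuclideanSpace ℝ (Fin n))) R₂ f := by
    rw [finrank_euclideanSpace_fin]
    exact funext hF
  obtain ⟨hgrad, hsolution⟩ := stmt_17_general hR₂ hnu.ne' hf hFeq hζc hζ0
    (fun r hr => hdae r (Ioo_subset_Icc_self hr))
    (fun y hy => (hu y hy.1.le hy.2.le).trans (hv ‖y‖)) ⟨hx₂, hx₁⟩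
  simp only [gradient_doubleWell] at hsolution
  exact ⟨hgrad.differentiableAt, hgrad.gradient, hsolution⟩
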